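/- (Theorem 3) Assume the state space is compact, the transition densities do not depend on t (a_t = a), and conditions (19), (20) and (24) hold. Then for every ε > 0 there exist constants c₁ and c₂ such that, for all times t and all sample sizes N, P[‖f^N_{t|t} − f_{t|t}‖₁ > ε] ≤ c₁ exp(−c₂ N). -/

import Mathlib

open MeasureTheory ProbabilityTheory

/-- The Markov operator `A_t*`. -/
noncomputable def markovOp {α : Type*} [MeasurableSpace α] (μ : Measure α)
    (a : α → α → ℝ) (f : α → ℝ) : α → ℝ :=
  fun x => ∫ x', f x' * a x' x ∂μ

/-- The Bayes operator `B(f, b)`. -/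
noncomputable def bayesOp {α : Type*} [MeasurableSpace α] (μ : Measure α)
    (f b : α → ℝ) : α → ℝ :=
  fun x => f x * b x / ∫ x', f x' * b x' ∂μ

/-- The true filter densities: `f_{0|0} = a_0` and
`f_{t|t} = B(A_t* f_{t-1|t-1}, b_t)` (the observations being absorbed into `b_t`). -/
noncomputable def trueFilter {α : Type*} [MeasurableSpace α] (μ : Measure α)
    (a0 : α → ℝ) (a : ℕ → α → α → ℝ) (b : ℕ → α → ℝ) : ℕ → α → ℝ
  | 0 => a0
  | (t + 1) => bayesOp μ (markovOp μ (a (t + 1)) (trueFilter μ a0 a b t)) (b (t + 1))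

/-- The particle filter densities: `f^N_{0|0} = a_0` and
`f^N_{t|t} = B(A_t* E_N(f^N_{t-1|t-1}), b_t)`, where `E_N` is the empirical
distribution of the particles `(X_{j,t-1})_{j≤N}` at time `t-1`. -/
noncomputable def particleFilter {α Ω : Type*} [MeasurableSpace α] (μ : Measure α)
    (a0 : α → ℝ) (a : ℕ → α → α → ℝ) (b : ℕ → α → ℝ)
    {N : ℕ} (X : ℕ → Fin N → Ω → α) : ℕ → Ω → α → ℝ
  | 0 => fun _ => a0
  | (t + 1) => fun ω =>
      bayesOp μ (fun x => (N : ℝ)⁻¹ * ∑ j, a (t + 1) (X t j ω) x) (b (t + 1))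

/-- The σ-field generated by the particles before time `t`. -/
def pastFiltration {α Ω : Type*} [MeasurableSpace α] [MeasurableSpace Ω]
    {N : ℕ} (X : ℕ → Fin N → Ω → α) (t : ℕ) : MeasurableSpace Ω :=
  ⨆ s : Fin t, MeasurableSpace.comap (fun ω => fun j : Fin N => X s j ω) inferInstance

/-!
Densities are compared by their ratio, that is, in Hilbert's projective metric. A mixing kernel
contracts the excess `ρ - 1` of the ratio by the factor `1 - c / C`, and the Bayes step does not
change the ratio, so that a sampling step whose predictions have a small relative error keeps a
small ratio small. Moreover the ratio of the two filters never exceeds `(C / c) ^ 2`. Hence the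
filter error is below `ε` as soon as the last `n` sampling steps are accurate, with `n` independent
of `t`: a union bound over `n` steps loses only a constant. The accuracy of one sampling step
reduces, by compactness and (24), to the empirical frequencies of the finitely many cells of a fine
partition, and these obey Hoeffding's inequality conditionally on the past.
-/

/-- `f` is a probability density with respect to `μ`. -/
structure IsProbDensity {α : Type*} [MeasurableSpace α] (μ : Measure α) (f : α → ℝ) : Prop where
  measurable : Measurable f
  nonneg : ∀ x, 0 ≤ f x
  integrable : Integrable f μ
  integral_eq_one : ∫ x, f x ∂μ = 1

/-- The measure with density `f` with respect to `μ`. -/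
noncomputable def densityMeasure {α : Type*} [MeasurableSpace α] (μ : Measure α) (f : α → ℝ) :
    Measure α :=
  μ.withDensity fun x => ENNReal.ofReal (f x)

/-- The empirical distribution of the points `x j`. -/
noncomputable def empiricalMeasure {ι α : Type*} [Fintype ι] [MeasurableSpace α] (x : ι → α) :
    Measure α :=
  (Fintype.card ι : ENNReal)⁻¹ • ∑ j, Measure.dirac (x j)

/-- The density at time `t + 1` predicted by the kernel `a` from the distribution `ν` at time `t`;
it covers both the exact prediction `A* f` (see `markovOp_eq_predict`) and the particle
prediction `A* E_N(f)` (see `predict_empiricalMeasure`). -/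
noncomputable def predict {α : Type*} [MeasurableSpace α] (a : α → α → ℝ) (ν : Measure α) :
    α → ℝ :=
  fun x => ∫ x', a x' x ∂ν

/-- The density predicted from `ν'` approximates the one predicted from `ν` up to the relative
error `θ`, uniformly over the state space. -/
def PredictClose {α : Type*} [MeasurableSpace α] (θ : ℝ) (a : α → α → ℝ) (ν' ν : Measure α) :
    Prop :=
  ∀ z, |predict a ν' z - predict a ν z| ≤ θ * predict a ν z

/-- The mixing condition (19): up to the factors `c` and `C`, the kernel `a` does not depend on its
starting point. -/
structure IsMixingKernel {α : Type*} [MeasurableSpace α] (c C : ℝ) (h : α → ℝ) (a : α → α → ℝ) :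
    Prop where
  measurable : Measurable (Function.uncurry a)
  pos : 0 < c
  le : c ≤ C
  nonneg : ∀ x, 0 ≤ h x
  lower : ∀ x' x, c * h x ≤ a x' x
  upper : ∀ x' x, a x' x ≤ C * h x

/-- Condition (24), uniformly in the index `t` of the kernels: relative to the dominating function
`h t`, the kernel `a t` depends uniformly continuously on its starting point. -/
def UniformlyContinuousKernels {T α : Type*} [PseudoMetricSpace α] (h : T → α → ℝ)
    (a : T → α → α → ℝ) : Prop :=
  ∀ δ > (0 : ℝ), ∃ η > (0 : ℝ), ∀ t x x', dist x x' < η → ∀ z, |a t x z - a t x' z| ≤ δ * h t z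

/-- Condition (20): the likelihood `b` of the observation has a finite positive integral against
the dominating function `h` of a mixing kernel. -/
structure IsLikelihood {α : Type*} [MeasurableSpace α] (μ : Measure α) (h b : α → ℝ) : Prop where
  measurable : Measurable b
  nonneg : ∀ x, 0 ≤ b x
  integrable : Integrable (fun x => b x * h x) μ
  pos : 0 < ∫ x, b x * h x ∂μ

/-- The functions `f` and `g` are proportional up to a factor in `[1, ρ]`. The logarithm of the
smallest such `ρ` is Hilbert's projective distance. -/
def RatioBound {α : Type*} (ρ : ℝ) (f g : α → ℝ) : Prop :=
  ∃ c : ℝ, 0 < c ∧ ∀ x, c * g x ≤ f x ∧ f x ≤ ρ * c * g x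

/-- Given `m`, the variables `X j` are independent with the random common distribution `ν`.
Independence is encoded by the factorization of the conditional expectations of products of
bounded test functions. -/
structure IsCondIIDSample {ι α Ω : Type*} [Fintype ι] [MeasurableSpace α] (m : MeasurableSpace Ω)
    {mΩ : MeasurableSpace Ω} (P : Measure Ω) (X : ι → Ω → α) (ν : Ω → Measure α) : Prop where
  le : m ≤ mΩ
  measurable : ∀ j, Measurable (X j)
  condExp_prod : ∀ φ : ι → α → ℝ, (∀ j, Measurable (φ j)) → (∀ j, ∃ B, ∀ x, |φ j x| ≤ B) →
    P[fun ω => ∏ j, φ j (X j ω) | m] =ᵐ[P] fun ω => ∏ j, ∫ x, φ j x ∂ν ω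

section Prediction

variable {α ι : Type*} [MeasurableSpace α] {μ : Measure α} {c C : ℝ} {f h b : α → ℝ}
  {a : α → α → ℝ}

lemma IsProbDensity.integral_densityMeasure (hf : IsProbDensity μ f) (g : α → ℝ) :
    ∫ x, g x ∂densityMeasure μ f = ∫ x, f x * g x ∂μ := by
  rw [densityMeasure, integral_withDensity_eq_integral_toReal_smul hf.measurable.ennreal_ofReal
    (by simp)]
  simp [ENNReal.toReal_ofReal, hf.nonneg]

lemma IsProbDensity.isProbabilityMeasure (hf : IsProbDensity μ f) :
    IsProbabilityMeasure (densityMeasure μ f) := by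
  constructor
  rw [densityMeasure, withDensity_apply _ .univ, Measure.restrict_univ,
    ← ofReal_integral_eq_lintegral_ofReal hf.integrable (.of_forall hf.nonneg),
    hf.integral_eq_one, ENNReal.ofReal_one]

lemma integral_empiricalMeasure [Fintype ι] {g : α → ℝ} (hg : Measurable g) (x : ι → α) :
    ∫ y, g y ∂empiricalMeasure x = (Fintype.card ι : ℝ)⁻¹ * ∑ j, g (x j) := by
  have hint (j : ι) : Integrable g (.dirac (x j)) :=
    integrable_dirac' hg.stronglyMeasurable enorm_lt_top
  rw [empiricalMeasure, integral_smul_measure, integral_finsetSum_measure fun j _ => hint j]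
  simp [integral_dirac' _ _ hg.stronglyMeasurable]

instance [Fintype ι] [Nonempty ι] (x : ι → α) : IsProbabilityMeasure (empiricalMeasure x) :=
  ⟨by simp [empiricalMeasure, ENNReal.inv_mul_cancel]⟩

lemma IsProbDensity.markovOp_eq_predict (hf : IsProbDensity μ f) (a : α → α → ℝ) :
    markovOp μ a f = predict a (densityMeasure μ f) :=
  funext fun _ => (hf.integral_densityMeasure _).symm

lemma predict_empiricalMeasure [Fintype ι] (ha : Measurable (Function.uncurry a)) (x : ι → α) :
    predict a (empiricalMeasure x) = fun z => (Fintype.card ι : ℝ)⁻¹ * ∑ j, a (x j) z :=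
  funext fun _ => integral_empiricalMeasure ha.of_uncurry_right x

namespace IsMixingKernel

lemma mem_Icc (ha : IsMixingKernel c C h a) (x' x : α) : a x' x ∈ Set.Icc 0 (C * h x) :=
  ⟨(mul_nonneg ha.pos.le (ha.nonneg x)).trans (ha.lower x' x), ha.upper x' x⟩

lemma integrable (ha : IsMixingKernel c C h a) (ν : Measure α) [IsFiniteMeasure ν] (x : α) :
    Integrable (fun x' => a x' x) ν :=
  .of_mem_Icc 0 (C * h x) ha.measurable.of_uncurry_right.aemeasurable
    (.of_forall fun x' => ha.mem_Icc x' x)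

lemma measurable_predict (ha : IsMixingKernel c C h a) (ν : Measure α) [IsFiniteMeasure ν] :
    Measurable (predict a ν) :=
  ha.measurable.stronglyMeasurable.integral_prod_left.measurable

lemma integrable_mul_sub (ha : IsMixingKernel c C h a) (hf : IsProbDensity μ f) (x : α) :
    Integrable (fun x' => f x' * (a x' x - c * h x)) μ := by
  refine hf.integrable.mul_bdd (c := C * h x - c * h x)
    (ha.measurable.of_uncurry_right.sub_const _).aestronglyMeasurable (.of_forall fun x' => ?_)
  rw [Real.norm_of_nonneg (sub_nonneg.2 (ha.lower x' x))]
  exact sub_le_sub_right (ha.upper x' x) _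

lemma markovOp_eq_add (ha : IsMixingKernel c C h a) (hf : IsProbDensity μ f) :
    markovOp μ a f =
      (fun x => c * h x) + fun x => ∫ x', f x' * (a x' x - c * h x) ∂μ := by
  funext x
  calc ∫ x', f x' * a x' x ∂μ
      = ∫ x', (f x' * (c * h x) + f x' * (a x' x - c * h x)) ∂μ := by
        simp only [← mul_add, add_sub_cancel]
    _ = c * h x + ∫ x', f x' * (a x' x - c * h x) ∂μ := by
      rw [integral_add (hf.integrable.mul_const _) (ha.integrable_mul_sub hf x),
        integral_mul_const, hf.integral_eq_one, one_mul]

variable (ν : Measure α) [IsProbabilityMeasure ν]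

lemma le_predict (ha : IsMixingKernel c C h a) (x : α) : c * h x ≤ predict a ν x := by
  simpa [predict] using
    integral_mono (integrable_const (c * h x)) (ha.integrable ν x) fun x' => ha.lower x' x

lemma predict_le (ha : IsMixingKernel c C h a) (x : α) : predict a ν x ≤ C * h x := by
  simpa [predict] using
    integral_mono (ha.integrable ν x) (integrable_const (C * h x)) fun x' => ha.upper x' x

lemma predict_nonneg (ha : IsMixingKernel c C h a) (x : α) : 0 ≤ predict a ν x :=
  (mul_nonneg ha.pos.le (ha.nonneg x)).trans (ha.le_predict ν x)

lemma integrable_predict_mul (ha : IsMixingKernel c C h a) (hb : IsLikelihood μ h b) :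
    Integrable (fun x => predict a ν x * b x) μ := by
  refine (hb.integrable.const_mul C).mono'
    ((ha.measurable_predict ν).mul hb.measurable).aestronglyMeasurable (.of_forall fun x => ?_)
  rw [Real.norm_of_nonneg (mul_nonneg (ha.predict_nonneg ν x) (hb.nonneg x))]
  linarith [mul_le_mul_of_nonneg_right (ha.predict_le ν x) (hb.nonneg x)]

lemma integral_predict_mul_pos (ha : IsMixingKernel c C h a) (hb : IsLikelihood μ h b) :
    0 < ∫ x, predict a ν x * b x ∂μ := by
  calc 0 < c * ∫ x, b x * h x ∂μ := mul_pos ha.pos hb.pos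
    _ = ∫ x, c * (b x * h x) ∂μ := (integral_const_mul _ _).symm
    _ ≤ ∫ x, predict a ν x * b x ∂μ :=
      integral_mono (hb.integrable.const_mul c) (ha.integrable_predict_mul ν hb) fun x => by
        linarith [mul_le_mul_of_nonneg_right (ha.le_predict ν x) (hb.nonneg x)]

lemma isProbDensity_bayesOp (ha : IsMixingKernel c C h a) (hb : IsLikelihood μ h b) :
    IsProbDensity μ (bayesOp μ (predict a ν) b) where
  measurable := ((ha.measurable_predict ν).mul hb.measurable).div_const _
  nonneg x := div_nonneg (mul_nonneg (ha.predict_nonneg ν x) (hb.nonneg x))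
    (ha.integral_predict_mul_pos ν hb).le
  integrable := (ha.integrable_predict_mul ν hb).div_const _
  integral_eq_one := by
    simp only [bayesOp]
    rw [integral_div, div_self (ha.integral_predict_mul_pos ν hb).ne']

end IsMixingKernel

end Prediction

section RatioBound

variable {α : Type*} {ρ σ : ℝ} {f g k : α → ℝ}

namespace RatioBound

lemma refl (f : α → ℝ) : RatioBound 1 f f :=
  ⟨1, one_pos, fun x => by simp⟩

lemma mono (hg : ∀ x, 0 ≤ g x) (hρσ : ρ ≤ σ) (H : RatioBound ρ f g) : RatioBound σ f g := by
  obtain ⟨c, hc, H⟩ := H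
  refine ⟨c, hc, fun x => ⟨(H x).1, (H x).2.trans ?_⟩⟩
  have := hg x
  gcongr

lemma trans (hρ : 0 ≤ ρ) (Hfg : RatioBound ρ f g) (Hgk : RatioBound σ g k) :
    RatioBound (ρ * σ) f k := by
  obtain ⟨c, hc, Hfg⟩ := Hfg
  obtain ⟨d, hd, Hgk⟩ := Hgk
  refine ⟨c * d, mul_pos hc hd, fun x => ⟨?_, ?_⟩⟩
  · calc c * d * k x = c * (d * k x) := mul_assoc ..
      _ ≤ c * g x := by gcongr; exact (Hgk x).1
      _ ≤ f x := (Hfg x).1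
  · calc f x ≤ ρ * c * g x := (Hfg x).2
      _ ≤ ρ * c * (σ * d * k x) := by gcongr; exact (Hgk x).2
      _ = ρ * σ * (c * d) * k x := by ring

lemma of_abs_sub_le (hρ : 1 ≤ ρ) (H : ∀ x, |f x - g x| ≤ (ρ - 1) / (ρ + 1) * g x) :
    RatioBound ρ f g := by
  have hlower : 2 / (ρ + 1) = 1 - (ρ - 1) / (ρ + 1) := by field_simp; ring
  have hupper : ρ * (2 / (ρ + 1)) = 1 + (ρ - 1) / (ρ + 1) := by field_simp; ring
  refine ⟨2 / (ρ + 1), by positivity, fun x => ?_⟩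
  rw [hupper, hlower]
  obtain ⟨hl, hu⟩ := abs_le.1 (H x)
  constructor <;> linarith

lemma of_mem_Icc {c C : ℝ} {h : α → ℝ} (hc : 0 < c) (hC : 0 < C)
    (hf : ∀ x, f x ∈ Set.Icc (c * h x) (C * h x)) (hg : ∀ x, g x ∈ Set.Icc (c * h x) (C * h x)) :
    RatioBound ((C / c) ^ 2) f g := by
  refine ⟨c / C, by positivity, fun x => ⟨?_, ?_⟩⟩
  · calc c / C * g x ≤ c / C * (C * h x) := by gcongr; exact (hg x).2
      _ = c * h x := by field_simp
      _ ≤ f x := (hf x).1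
  · calc f x ≤ C * h x := (hf x).2
      _ = C / c * (c * h x) := by field_simp
      _ ≤ C / c * g x := by gcongr; exact (hg x).1
      _ = (C / c) ^ 2 * (c / C) * g x := by field_simp

/-- The common part `u` damps the ratio between `u + f` and `u + g`. -/
lemma add_left {u : α → ℝ} {c γ : ℝ} (hc : 0 < c) (hc1 : c ≤ 1) (hρc : 1 ≤ ρ * c)
    (hγ : γ ∈ Set.Icc 0 1) (H : ∀ x, c * g x ≤ f x ∧ f x ≤ ρ * c * g x)
    (hug : ∀ x, 0 ≤ u x + g x) (hu : ∀ x, γ * (u x + g x) ≤ u x) :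
    RatioBound (γ + (1 - γ) * ρ) (u + f) (u + g) := by
  obtain ⟨hγ0, hγ1⟩ := hγ
  have hρ : 1 ≤ ρ := by nlinarith
  refine ⟨γ + (1 - γ) * c, by nlinarith, fun x => ⟨?_, ?_⟩⟩ <;> simp only [Pi.add_apply]
  · calc (γ + (1 - γ) * c) * (u x + g x)
        = c * (u x + g x) + (1 - c) * (γ * (u x + g x)) := by ring
      _ ≤ c * (u x + g x) + (1 - c) * u x := by
        gcongr
        exact hu x
      _ = u x + c * g x := by ring
      _ ≤ u x + f x := by gcongr; exact (H x).1
  · have hcoeff : ρ * c - (ρ * c - 1) * γ ≤ (γ + (1 - γ) * ρ) * (γ + (1 - γ) * c) := by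
      have : 0 ≤ γ * (1 - γ) * ((1 - c) * (ρ - 1)) :=
        mul_nonneg (mul_nonneg hγ0 (by linarith)) (mul_nonneg (by linarith) (by linarith))
      linarith
    calc u x + f x ≤ u x + ρ * c * g x := by gcongr; exact (H x).2
      _ = ρ * c * (u x + g x) - (ρ * c - 1) * u x := by ring
      _ ≤ ρ * c * (u x + g x) - (ρ * c - 1) * (γ * (u x + g x)) := by
        gcongr
        exact hu x
      _ = (ρ * c - (ρ * c - 1) * γ) * (u x + g x) := by ring
      _ ≤ (γ + (1 - γ) * ρ) * (γ + (1 - γ) * c) * (u x + g x) := by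
        gcongr
        exact hug x

variable [MeasurableSpace α] {μ : Measure α}

lemma bayesOp {b : α → ℝ} (hb : ∀ x, 0 ≤ b x) (hf : 0 < ∫ x, f x * b x ∂μ)
    (hg : 0 < ∫ x, g x * b x ∂μ) (H : RatioBound ρ f g) :
    RatioBound ρ (bayesOp μ f b) (bayesOp μ g b) := by
  obtain ⟨c, hc, H⟩ := H
  refine ⟨c * (∫ x, g x * b x ∂μ) / ∫ x, f x * b x ∂μ, by positivity, fun x => ⟨?_, ?_⟩⟩
  · calc c * (∫ x, g x * b x ∂μ) / (∫ x, f x * b x ∂μ) * _root_.bayesOp μ g b x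
        = c * g x * b x / ∫ x, f x * b x ∂μ := by simp only [_root_.bayesOp]; field_simp
      _ ≤ f x * b x / ∫ x, f x * b x ∂μ := by
        gcongr
        · exact hb x
        · exact (H x).1
  · calc f x * b x / ∫ x, f x * b x ∂μ ≤ ρ * c * g x * b x / ∫ x, f x * b x ∂μ := by
          gcongr
          · exact hb x
          · exact (H x).2
      _ = ρ * (c * (∫ x, g x * b x ∂μ) / ∫ x, f x * b x ∂μ) * _root_.bayesOp μ g b x := by
        simp only [_root_.bayesOp]; field_simp

end RatioBound

variable [MeasurableSpace α] {μ : Measure α}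

lemma IsProbDensity.const_le_one_of_mul_le (hf : IsProbDensity μ f) (hg : IsProbDensity μ g) {c : ℝ}
    (H : ∀ x, c * g x ≤ f x) : c ≤ 1 := by
  simpa [integral_const_mul, hf.integral_eq_one, hg.integral_eq_one] using
    integral_mono (hg.integrable.const_mul c) hf.integrable H

lemma IsProbDensity.one_le_const_of_le_mul (hf : IsProbDensity μ f) (hg : IsProbDensity μ g) {c : ℝ}
    (H : ∀ x, f x ≤ c * g x) : 1 ≤ c := by
  simpa [integral_const_mul, hf.integral_eq_one, hg.integral_eq_one] using
    integral_mono hf.integrable (hg.integrable.const_mul c) H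

lemma RatioBound.integral_abs_sub_le (hf : IsProbDensity μ f) (hg : IsProbDensity μ g)
    (hρ : 0 ≤ ρ) (H : RatioBound ρ f g) : ∫ x, |f x - g x| ∂μ ≤ ρ - 1 := by
  obtain ⟨c, -, H⟩ := H
  have hc := hf.const_le_one_of_mul_le hg fun x => (H x).1
  have hρc := hf.one_le_const_of_le_mul hg fun x => (H x).2
  have hpointwise (x : α) : |f x - g x| ≤ (ρ - 1) * g x := by
    obtain ⟨hl, hu⟩ := H x
    have hgx := hg.nonneg x
    have hρ1 : 1 ≤ ρ := by nlinarith
    rw [abs_le]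
    constructor
    · have hlower : 2 - ρ ≤ c := by nlinarith
      linarith [mul_le_mul_of_nonneg_right hlower hgx]
    · calc f x - g x ≤ ρ * c * g x - g x := by gcongr
        _ ≤ ρ * 1 * g x - g x := by gcongr
        _ = (ρ - 1) * g x := by ring
  calc ∫ x, |f x - g x| ∂μ ≤ ∫ x, (ρ - 1) * g x ∂μ :=
        integral_mono (hf.integrable.sub hg.integrable).abs (hg.integrable.const_mul _) hpointwise
    _ = ρ - 1 := by rw [integral_const_mul, hg.integral_eq_one, mul_one]

/-- Both predictions dominate the same function `c * h`; what remains of them is compared by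
integrating the nonnegative kernel `a - c * h`. -/
lemma RatioBound.markovOp {c C : ℝ} {h : α → ℝ} {a : α → α → ℝ} (ha : IsMixingKernel c C h a)
    (hf : IsProbDensity μ f) (hg : IsProbDensity μ g) (H : RatioBound ρ f g) :
    RatioBound (c / C + (1 - c / C) * ρ) (markovOp μ a f) (markovOp μ a g) := by
  obtain ⟨d, hd, H⟩ := H
  have hC : 0 < C := ha.pos.trans_le ha.le
  have hg_prob := hg.isProbabilityMeasure
  have hg_add (x : α) : c * h x + ∫ x', g x' * (a x' x - c * h x) ∂μ =
      predict a (densityMeasure μ g) x := by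
    rw [← hg.markovOp_eq_predict, ha.markovOp_eq_add hg, Pi.add_apply]
  have hres_nonneg (x' x : α) : 0 ≤ a x' x - c * h x := sub_nonneg.2 (ha.lower x' x)
  rw [ha.markovOp_eq_add hf, ha.markovOp_eq_add hg]
  refine add_left hd (hf.const_le_one_of_mul_le hg fun x => (H x).1)
    (hf.one_le_const_of_le_mul hg fun x => (H x).2)
    ⟨(div_pos ha.pos hC).le, div_le_one_of_le₀ ha.le hC.le⟩ (fun x => ⟨?_, ?_⟩) (fun x => ?_)
    fun x => ?_
  · rw [← integral_const_mul]
    refine integral_mono ((ha.integrable_mul_sub hg x).const_mul d) (ha.integrable_mul_sub hf x)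
      fun x' => ?_
    simpa only [mul_assoc] using mul_le_mul_of_nonneg_right (H x').1 (hres_nonneg x' x)
  · rw [← integral_const_mul]
    refine integral_mono (ha.integrable_mul_sub hf x)
      ((ha.integrable_mul_sub hg x).const_mul (ρ * d)) fun x' => ?_
    simpa only [mul_assoc] using mul_le_mul_of_nonneg_right (H x').2 (hres_nonneg x' x)
  · rw [hg_add]
    exact ha.predict_nonneg _ x
  · calc c / C * (c * h x + ∫ x', g x' * (a x' x - c * h x) ∂μ) ≤ c / C * (C * h x) := by
          rw [hg_add]
          exact mul_le_mul_of_nonneg_left (ha.predict_le _ x) (div_pos ha.pos hC).le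
      _ = c * h x := by field_simp

end RatioBound

section Concentration

variable {ι α Ω : Type*} [Fintype ι] [Nonempty ι] [MeasurableSpace α] {m mΩ : MeasurableSpace Ω}
  {P : Measure Ω} {X : ι → Ω → α}
  {ν : Ω → Measure α} [∀ ω, IsProbabilityMeasure (ν ω)] {g : α → ℝ} {u v : ℝ}

namespace IsCondIIDSample

lemma aestronglyMeasurable_integral (S : IsCondIIDSample m P X ν) (hg : Measurable g)
    (hg_bdd : ∃ B, ∀ x, |g x| ≤ B) : AEStronglyMeasurable[m] (fun ω => ∫ x, g x ∂ν ω) P := by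
  classical
  let j : ι := Classical.arbitrary ι
  let φ : ι → α → ℝ := fun i => if i = j then g else fun _ => 1
  have hφ : P[fun ω => ∏ i, φ i (X i ω) | m] =ᵐ[P] fun ω => ∏ i, ∫ x, φ i x ∂ν ω := by
    refine S.condExp_prod φ (fun i => ?_) fun i => ?_ <;> dsimp only [φ] <;> split_ifs
    exacts [hg, measurable_const, hg_bdd, ⟨1, by simp⟩]
  refine ⟨_, stronglyMeasurable_condExp, .trans (.of_forall fun ω => ?_) hφ.symm⟩
  dsimp only
  rw [Fintype.prod_eq_single j fun i hi => by simp [φ, hi]]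
  simp [φ]

lemma integrable_exp_mul_sum [IsProbabilityMeasure P] (S : IsCondIIDSample m P X ν)
    (hg : Measurable g) (hg_mem : ∀ x, g x ∈ Set.Icc u v) (l : ℝ) :
    Integrable (fun ω => Real.exp (l * ∑ j, (g (X j ω) - ∫ x, g x ∂ν ω))) P := by
  have hG : AEMeasurable (fun ω => ∫ x, g x ∂ν ω) P :=
    ((S.aestronglyMeasurable_integral hg ⟨_, fun x => abs_le_max_abs_abs (hg_mem x).1
      (hg_mem x).2⟩).mono S.le).aemeasurable
  have hG_mem (ω : Ω) : ∫ x, g x ∂ν ω ∈ Set.Icc u v :=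
    (convex_Icc u v).integral_mem isClosed_Icc (.of_forall hg_mem)
      (.of_mem_Icc u v hg.aemeasurable (.of_forall hg_mem))
  refine integrable_exp_mul_of_mem_Icc (a := ∑ _j : ι, (u - v)) (b := ∑ _j : ι, (v - u))
    (Finset.aemeasurable_fun_sum _ fun j _ => (hg.comp (S.measurable j)).aemeasurable.sub hG)
    (.of_forall fun ω => ⟨Finset.sum_le_sum fun j _ => ?_, Finset.sum_le_sum fun j _ => ?_⟩)
  · exact sub_le_sub (hg_mem _).1 (hG_mem ω).2
  · exact sub_le_sub (hg_mem _).2 (hG_mem ω).1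

/-- The random mean is known given `m`, so that its exponential can be pulled out of the
conditional expectation, which factorizes over the remaining product. -/
lemma condExp_exp_mul_sum [IsProbabilityMeasure P] (S : IsCondIIDSample m P X ν)
    (hg : Measurable g) (hg_mem : ∀ x, g x ∈ Set.Icc u v) (l : ℝ) :
    P[fun ω => Real.exp (l * ∑ j, (g (X j ω) - ∫ x, g x ∂ν ω)) | m] =ᵐ[P]
      fun ω => mgf (fun x => g x - ∫ y, g y ∂ν ω) (ν ω) l ^ Fintype.card ι := by
  set n := Fintype.card ι
  let G : Ω → ℝ := fun ω => ∫ x, g x ∂ν ω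
  let D : Ω → ℝ := fun ω => Real.exp (-(l * G ω)) ^ n
  let E : Ω → ℝ := fun ω => ∏ j, Real.exp (l * g (X j ω))
  have hg_abs (x : α) : |g x| ≤ max |u| |v| := abs_le_max_abs_abs (hg_mem x).1 (hg_mem x).2
  have hDE : (fun ω => Real.exp (l * ∑ j, (g (X j ω) - G ω))) = D * E := by
    funext ω
    simp only [D, E, Pi.mul_apply, ← Real.exp_nat_mul, ← Real.exp_sum, ← Real.exp_add,
      Finset.sum_sub_distrib, Finset.sum_const, ← Finset.mul_sum, Finset.card_univ, nsmul_eq_mul, n]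
    ring_nf
  have hD : AEStronglyMeasurable[m] D P :=
    (by fun_prop : Continuous fun y => Real.exp (-(l * y)) ^ n).comp_aestronglyMeasurable
      (S.aestronglyMeasurable_integral hg ⟨_, hg_abs⟩)
  have hE_int : Integrable E P := by
    have hX (j : ι) := S.measurable j
    simp only [E, ← Real.exp_sum, ← Finset.mul_sum]
    exact integrable_exp_mul_of_mem_Icc (a := ∑ _j : ι, u) (b := ∑ _j : ι, v)
      (by fun_prop : Measurable fun ω => ∑ j, g (X j ω)).aemeasurable
      (.of_forall fun ω => ⟨Finset.sum_le_sum fun j _ => (hg_mem _).1,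
        Finset.sum_le_sum fun j _ => (hg_mem _).2⟩)
  have hE : P[E | m] =ᵐ[P] fun ω => (∫ x, Real.exp (l * g x) ∂ν ω) ^ n := by
    have hbdd (x : α) : |Real.exp (l * g x)| ≤ Real.exp (|l| * max |u| |v|) := by
      rw [Real.abs_exp, Real.exp_le_exp]
      calc l * g x ≤ |l| * |g x| := (le_abs_self _).trans (abs_mul _ _).le
        _ ≤ |l| * max |u| |v| := by gcongr; exact hg_abs x
    simpa using S.condExp_prod (fun _ x => Real.exp (l * g x)) (fun _ => by fun_prop)
      fun _ => ⟨_, hbdd⟩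
  have hDE_int : Integrable (D * E) P := hDE ▸ S.integrable_exp_mul_sum hg hg_mem l
  rw [hDE]
  filter_upwards [condExp_mul_of_aestronglyMeasurable_left hD hDE_int hE_int, hE] with ω hω hEω
  rw [hω, Pi.mul_apply, hEω, ← mul_pow, ← integral_const_mul, mgf]
  simp only [G, mul_sub, Real.exp_sub, Real.exp_neg, div_eq_inv_mul]

/-- Hoeffding's lemma bounds the conditional moment generating function. -/
lemma hasSubgaussianMGF_sum [IsProbabilityMeasure P] (S : IsCondIIDSample m P X ν)
    (hg : Measurable g) (hg_mem : ∀ x, g x ∈ Set.Icc u v) :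
    HasSubgaussianMGF (fun ω => ∑ j, (g (X j ω) - ∫ x, g x ∂ν ω))
      (Fintype.card ι * (‖v - u‖₊ / 2) ^ 2) P where
  integrable_exp_mul l := S.integrable_exp_mul_sum hg hg_mem l
  mgf_le l := by
    have hmgf (ω : Ω) : mgf (fun x => g x - ∫ y, g y ∂ν ω) (ν ω) l ^ Fintype.card ι ≤
        Real.exp ((Fintype.card ι * (‖v - u‖₊ / 2) ^ 2 : NNReal) * l ^ 2 / 2) := by
      calc _ ≤ Real.exp (((‖v - u‖₊ / 2) ^ 2 : NNReal) * l ^ 2 / 2) ^ Fintype.card ι := by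
            gcongr
            · exact mgf_nonneg
            · exact (hasSubgaussianMGF_of_mem_Icc hg.aemeasurable (.of_forall hg_mem)).mgf_le l
        _ = _ := by
          rw [← Real.exp_nat_mul]
          push_cast
          ring_nf
    have hcond := S.condExp_exp_mul_sum hg hg_mem l
    calc mgf _ P l = ∫ ω, mgf (fun x => g x - ∫ y, g y ∂ν ω) (ν ω) l ^ Fintype.card ι ∂P := by
          rw [mgf, ← integral_condExp S.le, integral_congr_ae hcond]
      _ ≤ ∫ _, Real.exp ((Fintype.card ι * (‖v - u‖₊ / 2) ^ 2 : NNReal) * l ^ 2 / 2) ∂P :=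
        integral_mono (integrable_condExp.congr hcond) (integrable_const _) hmgf
      _ = _ := by simp

lemma measureReal_le_abs_measureReal_sub_le [IsProbabilityMeasure P]
    (S : IsCondIIDSample m P X ν) {A : Set α} (hA : MeasurableSet A) {η : ℝ} (hη : 0 ≤ η) :
    P.real {ω | η ≤ |(empiricalMeasure fun j => X j ω).real A - (ν ω).real A|} ≤
      2 * Real.exp (-(2 * η ^ 2) * Fintype.card ι) := by
  set n : ℝ := (Fintype.card ι : ℝ)
  have hn : 0 < n := by simp [n, Fintype.card_pos]
  let g : α → ℝ := A.indicator 1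
  have hg : Measurable g := measurable_one.indicator hA
  have hg_mem (x : α) : g x ∈ Set.Icc 0 1 :=
    ⟨Set.indicator_nonneg (by simp) x, Set.indicator_le_self' (by simp) x⟩
  let T : Ω → ℝ := fun ω => ∑ j, (g (X j ω) - ∫ x, g x ∂ν ω)
  have hT (ω : Ω) : n * ((empiricalMeasure fun j => X j ω).real A - (ν ω).real A) = T ω := by
    rw [← integral_indicator_one hA, ← integral_indicator_one hA, integral_empiricalMeasure hg]
    simp [T, Finset.sum_sub_distrib, mul_sub, hn.ne', n, g]
  have hsub := S.hasSubgaussianMGF_sum hg hg_mem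
  have hηn : 0 ≤ n * η := by positivity
  have hexp : -(n * η) ^ 2 / (2 * ((Fintype.card ι * (‖(1 : ℝ) - 0‖₊ / 2) ^ 2 : NNReal) : ℝ)) =
      -(2 * η ^ 2) * n := by
    simp only [sub_zero, nnnorm_one, NNReal.coe_mul, NNReal.coe_natCast, NNReal.coe_pow,
      NNReal.coe_div, NNReal.coe_one, NNReal.coe_ofNat, n]
    field_simp
  calc P.real {ω | η ≤ |(empiricalMeasure fun j => X j ω).real A - (ν ω).real A|}
      ≤ P.real ({ω | n * η ≤ T ω} ∪ {ω | n * η ≤ (-T) ω}) := by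
        refine measureReal_mono fun ω hω => ?_
        simp only [Set.mem_union, Set.mem_ofPred_eq, Pi.neg_apply, ← hT, ← mul_neg,
          mul_le_mul_iff_right₀ hn]
        exact le_abs.1 hω
    _ ≤ P.real {ω | n * η ≤ T ω} + P.real {ω | n * η ≤ (-T) ω} := measureReal_union_le _ _
    _ ≤ Real.exp (-(2 * η ^ 2) * n) + Real.exp (-(2 * η ^ 2) * n) :=
      hexp ▸ add_le_add (hsub.measure_ge_le hηn) (hsub.neg.measure_ge_le hηn)
    _ = 2 * Real.exp (-(2 * η ^ 2) * n) := (two_mul _).symm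

end IsCondIIDSample

end Concentration

lemma exists_simpleFunc_dist_lt {α : Type*} [PseudoMetricSpace α] [Nonempty α] [MeasurableSpace α]
    [OpensMeasurableSpace α] (hα : TotallyBounded (Set.univ : Set α)) {η : ℝ} (hη : 0 < η) :
    ∃ π : SimpleFunc α α, ∀ x, dist x (π x) < η := by
  obtain ⟨s, hs_fin, hs⟩ := Metric.totallyBounded_iff.1 hα η hη
  obtain ⟨n, e, -, rfl⟩ := hs_fin.fin_param
  let e' : ℕ → α := Function.extend Fin.val e fun _ => Classical.arbitrary α
  refine ⟨SimpleFunc.nearestPt e' n, fun x => ?_⟩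
  obtain ⟨_, ⟨k, rfl⟩, hk⟩ := Set.mem_iUnion₂.1 (hs (Set.mem_univ x))
  have he' : e' k = e k := Fin.val_injective.extend_apply _ _ _
  rw [← edist_lt_ofReal, edist_comm]
  calc edist (SimpleFunc.nearestPt e' n x) x ≤ edist (e' k) x :=
        SimpleFunc.edist_nearestPt_le e' x k.2.le
    _ = edist (e k) x := by rw [he']
    _ < ENNReal.ofReal η := by rwa [edist_lt_ofReal, dist_comm]

lemma integral_map_simpleFunc {α β : Type*} [MeasurableSpace α] (ν : Measure α) [IsFiniteMeasure ν]
    (π : SimpleFunc α β) (g : β → ℝ) :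
    ∫ x, π.map g x ∂ν = ∑ y ∈ π.range, ν.real (π ⁻¹' {y}) * g y := by
  classical
  have hsum (x : α) : π.map g x = ∑ y ∈ π.range, (π ⁻¹' {y}).indicator (fun _ => g y) x := by
    simp [Set.indicator_apply]
  simp_rw [hsum]
  rw [integral_finsetSum _ fun y _ => (integrable_const _).indicator (π.measurableSet_fiber y)]
  simp [integral_indicator_const, π.measurableSet_fiber]

lemma abs_integral_sub_integral_le_of_simpleFunc {α : Type*} [MeasurableSpace α] (ν ν' : Measure α)
    [IsProbabilityMeasure ν] [IsProbabilityMeasure ν'] {g : α → ℝ} (hg : Measurable g)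
    {π : SimpleFunc α α} {δ η M : ℝ} (hπ : ∀ x, |g x - g (π x)| ≤ δ) (hM : ∀ x, |g x| ≤ M)
    (hη : ∀ y ∈ π.range, |ν.real (π ⁻¹' {y}) - ν'.real (π ⁻¹' {y})| ≤ η) :
    |∫ x, g x ∂ν - ∫ x, g x ∂ν'| ≤ 2 * δ + π.range.card * η * M := by
  have hg_int (ν : Measure α) [IsProbabilityMeasure ν] : Integrable g ν :=
    .of_bound hg.aestronglyMeasurable M (.of_forall hM)
  have happrox (ν : Measure α) [IsProbabilityMeasure ν] :
      |∫ x, g x ∂ν - ∫ x, π.map g x ∂ν| ≤ δ := by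
    rw [← integral_sub (hg_int ν) ((π.map g).integrable_of_isFiniteMeasure)]
    simpa using norm_integral_le_of_norm_le_const (μ := ν) (f := fun x => g x - g (π x))
      (.of_forall hπ)
  have hfibers : |∫ x, π.map g x ∂ν - ∫ x, π.map g x ∂ν'| ≤ π.range.card * η * M := by
    rw [integral_map_simpleFunc, integral_map_simpleFunc, ← Finset.sum_sub_distrib]
    calc |∑ y ∈ π.range, (ν.real (π ⁻¹' {y}) * g y - ν'.real (π ⁻¹' {y}) * g y)|
        ≤ ∑ y ∈ π.range, |ν.real (π ⁻¹' {y}) * g y - ν'.real (π ⁻¹' {y}) * g y| :=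
          Finset.abs_sum_le_sum_abs _ _
      _ ≤ ∑ _y ∈ π.range, η * M := by
        refine Finset.sum_le_sum fun y hy => ?_
        rw [← sub_mul, abs_mul]
        exact mul_le_mul (hη y hy) (hM y) (abs_nonneg _) ((abs_nonneg _).trans (hη y hy))
      _ = π.range.card * η * M := by rw [Finset.sum_const, nsmul_eq_mul, mul_assoc]
  have h₁ := abs_le.1 (happrox ν)
  have h₂ := abs_le.1 (happrox ν')
  have h₃ := abs_le.1 hfibers
  exact abs_le.2 ⟨by linarith, by linarith⟩

lemma IsMixingKernel.abs_predict_sub_le {α : Type*} [MeasurableSpace α] {c C δ η : ℝ} {h : α → ℝ}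
    {a : α → α → ℝ} (ha : IsMixingKernel c C h a) {ν ν' : Measure α} [IsProbabilityMeasure ν]
    [IsProbabilityMeasure ν'] {π : SimpleFunc α α}
    (hπ : ∀ x z, |a x z - a (π x) z| ≤ δ * h z)
    (hη : ∀ y ∈ π.range, |ν.real (π ⁻¹' {y}) - ν'.real (π ⁻¹' {y})| ≤ η) (z : α) :
    |predict a ν z - predict a ν' z| ≤ (2 * δ + π.range.card * η * C) * h z := by
  have ha_abs (x : α) : |a x z| ≤ C * h z := by
    rw [abs_of_nonneg (ha.mem_Icc x z).1]
    exact (ha.mem_Icc x z).2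
  calc |predict a ν z - predict a ν' z| ≤ 2 * (δ * h z) + π.range.card * η * (C * h z) :=
        abs_integral_sub_integral_le_of_simpleFunc ν ν' ha.measurable.of_uncurry_right
          (hπ · z) ha_abs hη
    _ = (2 * δ + π.range.card * η * C) * h z := by ring

/-- If the empirical frequencies are accurate on the cells of a partition on which the kernels
hardly vary, then so are all predictions; Hoeffding's inequality controls each frequency. -/
lemma exists_measureReal_not_predictClose_le {α Ω T : Type*} [PseudoMetricSpace α]
    [MeasurableSpace α] [OpensMeasurableSpace α] [Nonempty α] [MeasurableSpace Ω] (P : Measure Ω)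
    [IsProbabilityMeasure P] (hα : TotallyBounded (Set.univ : Set α)) {c C : ℝ} {h : T → α → ℝ}
    {a : T → α → α → ℝ} (ha : ∀ t, IsMixingKernel c C (h t) (a t))
    (ha_unif : UniformlyContinuousKernels h a) {θ : ℝ} (hθ : 0 < θ) :
    ∃ K r : ℝ, 0 ≤ K ∧ 0 < r ∧ ∀ (t : T) {N : ℕ} [NeZero N] {m : MeasurableSpace Ω}
      {X : Fin N → Ω → α} {ν : Ω → Measure α} [∀ ω, IsProbabilityMeasure (ν ω)],
      IsCondIIDSample m P X ν →
      P.real {ω | ¬ PredictClose θ (a t) (empiricalMeasure fun j => X j ω) (ν ω)} ≤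
        K * Real.exp (-r * N) := by
  cases isEmpty_or_nonempty T
  · exact ⟨0, 1, le_rfl, one_pos, isEmptyElim⟩
  have hc : 0 < c := (ha (Classical.arbitrary T)).pos
  have hC : 0 < C := hc.trans_le (ha (Classical.arbitrary T)).le
  obtain ⟨d, hd, had⟩ := ha_unif (θ * c / 4) (by positivity)
  obtain ⟨π, hπ⟩ := exists_simpleFunc_dist_lt hα hd
  have hcard : 0 < (π.range.card : ℝ) :=
    Nat.cast_pos.2 (Finset.card_pos.2 ⟨_, π.mem_range_self (Classical.arbitrary α)⟩)
  set η := θ * c / (2 * π.range.card * C) with hη_def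
  have hη : 0 < η := by positivity
  refine ⟨2 * π.range.card, 2 * η ^ 2, by positivity, by positivity, fun t N _ m X ν _ S => ?_⟩
  let E (y : α) : Set Ω := {ω | η ≤ |(empiricalMeasure fun j => X j ω).real (π ⁻¹' {y}) -
    (ν ω).real (π ⁻¹' {y})|}
  have hsub : {ω | ¬ PredictClose θ (a t) (empiricalMeasure fun j => X j ω) (ν ω)} ⊆
      ⋃ y ∈ π.range, E y := by
    refine fun ω hclose => by_contra fun hω => hclose fun z => ?_
    simp only [E, Set.mem_iUnion, Set.mem_ofPred_eq, not_exists, not_le] at hω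
    calc _ ≤ (2 * (θ * c / 4) + π.range.card * η * C) * h t z :=
          (ha t).abs_predict_sub_le (fun x z => had t x (π x) (hπ x) z) (fun y hy => (hω y hy).le) z
      _ = θ * (c * h t z) := by rw [hη_def]; field_simp; ring
      _ ≤ θ * predict (a t) (ν ω) z := by gcongr; exact (ha t).le_predict _ z
  calc _ ≤ P.real (⋃ y ∈ π.range, E y) := measureReal_mono hsub
    _ ≤ ∑ y ∈ π.range, P.real (E y) := measureReal_biUnion_finset_le _ _
    _ ≤ ∑ _y ∈ π.range, 2 * Real.exp (-(2 * η ^ 2) * N) := Finset.sum_le_sum fun y _ => by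
      simpa using S.measureReal_le_abs_measureReal_sub_le (π.measurableSet_fiber y) hη.le
    _ = 2 * π.range.card * Real.exp (-(2 * η ^ 2) * N) := by
      rw [Finset.sum_const, nsmul_eq_mul]
      ring

section Window

/-- A slight perturbation `κ` of the contraction `ρ ↦ γ + (1 - γ) * ρ` still contracts, now towards
`1 + e`. -/
lemma exists_mul_le_of_contraction {γ e : ℝ} (hγ : 0 < γ) (hγ1 : γ ≤ 1) (he : 0 < e) :
    ∃ κ q : ℝ, 1 < κ ∧ 0 ≤ q ∧ q < 1 ∧
      ∀ ρ, 1 ≤ ρ → κ * (γ + (1 - γ) * ρ) ≤ 1 + e + q * (ρ - (1 + e)) := by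
  have hmin : 0 < min 1 e := lt_min one_pos he
  refine ⟨1 + γ / 2 * min 1 e, 1 - γ / 2, by linarith [mul_pos hγ hmin], by linarith, by linarith,
    fun ρ hρ => ?_⟩
  have hslope : (1 + γ / 2 * min 1 e) * (1 - γ) ≤ 1 - γ / 2 := by
    calc (1 + γ / 2 * min 1 e) * (1 - γ) ≤ (1 + γ / 2 * 1) * (1 - γ) := by
          gcongr
          exact min_le_left 1 e
      _ ≤ 1 - γ / 2 := by nlinarith
  have hshift : γ / 2 * min 1 e ≤ γ / 2 * e := by gcongr; exact min_le_right 1 e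
  calc (1 + γ / 2 * min 1 e) * (γ + (1 - γ) * ρ)
      = 1 + γ / 2 * min 1 e + (1 + γ / 2 * min 1 e) * (1 - γ) * (ρ - 1) := by ring
    _ ≤ 1 + γ / 2 * e + (1 - γ / 2) * (ρ - 1) := by
      gcongr
    _ = 1 + e + (1 - γ / 2) * (ρ - (1 + e)) := by ring

lemma RatioBound.add_of_forall_succ {α : Type*} {f g : ℕ → α → ℝ} {e q ρ : ℝ} (he : 0 ≤ e)
    (hq : 0 ≤ q) (hρ : 1 ≤ ρ) {s k : ℕ} (hg : ∀ x, 0 ≤ g s x) (H : RatioBound ρ (f s) (g s))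
    (hstep : ∀ t, s ≤ t → t < s + k → ∀ σ, 1 ≤ σ → RatioBound σ (f t) (g t) →
      RatioBound (1 + e + q * (σ - (1 + e))) (f (t + 1)) (g (t + 1))) :
    RatioBound (1 + e + q ^ k * (ρ - 1)) (f (s + k)) (g (s + k)) := by
  induction k with
  | zero => simpa using H.mono hg (by linarith)
  | succ k ih =>
    have hσ : 0 ≤ q ^ k * (ρ - 1) := mul_nonneg (pow_nonneg hq k) (by linarith)
    have hratio : 1 + e + q ^ (k + 1) * (ρ - 1) =
        1 + e + q * (1 + e + q ^ k * (ρ - 1) - (1 + e)) := by ring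
    rw [hratio, ← add_assoc]
    exact hstep (s + k) (by lia) (by lia) _ (by linarith)
      (ih fun t hst htk => hstep t hst (by lia))

end Window

/-- A state space model with initial density `a0`, and at each time `t` a transition density `a t`
that is mixing with dominating function `h t` and constants `c`, `C` not depending on `t`, and a
likelihood `b t` of the observation. -/
structure IsMixingModel {α : Type*} [MeasurableSpace α] (μ : Measure α) (c C : ℝ) (a0 : α → ℝ)
    (a : ℕ → α → α → ℝ) (h b : ℕ → α → ℝ) : Prop where
  initial : IsProbDensity μ a0
  kernel : ∀ t, IsMixingKernel c C (h t) (a t)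
  likelihood : ∀ t, IsLikelihood μ (h t) (b t)

namespace IsMixingModel

variable {α Ω : Type*} [MeasurableSpace α] {μ : Measure α} {c C : ℝ} {a0 : α → ℝ}
  {a : ℕ → α → α → ℝ} {h b : ℕ → α → ℝ} {N : ℕ}

lemma isProbDensity_trueFilter (M : IsMixingModel μ c C a0 a h b) (t : ℕ) :
    IsProbDensity μ (trueFilter μ a0 a b t) := by
  induction t with
  | zero => exact M.initial
  | succ t ih =>
    have := ih.isProbabilityMeasure
    rw [trueFilter, ih.markovOp_eq_predict]
    exact (M.kernel _).isProbDensity_bayesOp _ (M.likelihood _)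

lemma particleFilter_succ (M : IsMixingModel μ c C a0 a h b) (X : ℕ → Fin N → Ω → α) (t : ℕ)
    (ω : Ω) : particleFilter μ a0 a b X (t + 1) ω =
      bayesOp μ (predict (a (t + 1)) (empiricalMeasure fun j => X t j ω)) (b (t + 1)) := by
  rw [predict_empiricalMeasure (M.kernel _).measurable, Fintype.card_fin]
  rfl

lemma one_le_sq_div (M : IsMixingModel μ c C a0 a h b) : 1 ≤ (C / c) ^ 2 :=
  one_le_pow₀ ((one_le_div (M.kernel 0).pos).2 (M.kernel 0).le)

variable [NeZero N]

lemma isProbDensity_particleFilter (M : IsMixingModel μ c C a0 a h b) (X : ℕ → Fin N → Ω → α)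
    (t : ℕ) (ω : Ω) : IsProbDensity μ (particleFilter μ a0 a b X t ω) := by
  cases t with
  | zero => exact M.initial
  | succ t =>
    rw [M.particleFilter_succ]
    exact (M.kernel _).isProbDensity_bayesOp _ (M.likelihood _)

lemma ratioBound_filter (M : IsMixingModel μ c C a0 a h b) (X : ℕ → Fin N → Ω → α) (t : ℕ)
    (ω : Ω) :
    RatioBound ((C / c) ^ 2) (particleFilter μ a0 a b X t ω) (trueFilter μ a0 a b t) := by
  cases t with
  | zero => exact (RatioBound.refl a0).mono M.initial.nonneg M.one_le_sq_div
  | succ t =>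
    have hk := M.kernel (t + 1)
    have hf := M.isProbDensity_trueFilter t
    have := hf.isProbabilityMeasure
    rw [M.particleFilter_succ, trueFilter, hf.markovOp_eq_predict]
    exact (RatioBound.of_mem_Icc hk.pos (hk.pos.trans_le hk.le)
      (fun x => ⟨hk.le_predict _ x, hk.predict_le _ x⟩)
      (fun x => ⟨hk.le_predict _ x, hk.predict_le _ x⟩)).bayesOp (M.likelihood _).nonneg
      (hk.integral_predict_mul_pos _ (M.likelihood _))
      (hk.integral_predict_mul_pos _ (M.likelihood _))

/-- The sampling error contributes the factor `κ`, the exact prediction contracts the ratio, and the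
Bayes step preserves it. -/
lemma ratioBound_filter_succ (M : IsMixingModel μ c C a0 a h b) {X : ℕ → Fin N → Ω → α} {t : ℕ}
    {ω : Ω} {κ ρ : ℝ} (hκ : 1 ≤ κ)
    (hsample : PredictClose ((κ - 1) / (κ + 1)) (a (t + 1)) (empiricalMeasure fun j => X t j ω)
      (densityMeasure μ (particleFilter μ a0 a b X t ω)))
    (H : RatioBound ρ (particleFilter μ a0 a b X t ω) (trueFilter μ a0 a b t)) :
    RatioBound (κ * (c / C + (1 - c / C) * ρ)) (particleFilter μ a0 a b X (t + 1) ω)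
      (trueFilter μ a0 a b (t + 1)) := by
  have hf := M.isProbDensity_trueFilter t
  have hfN := M.isProbDensity_particleFilter X t ω
  have := hf.isProbabilityMeasure
  have hmix := H.markovOp (M.kernel (t + 1)) hfN hf
  rw [hfN.markovOp_eq_predict, hf.markovOp_eq_predict] at hmix
  rw [M.particleFilter_succ, trueFilter, hf.markovOp_eq_predict]
  exact ((RatioBound.of_abs_sub_le hκ hsample).trans (by linarith) hmix).bayesOp
    (M.likelihood _).nonneg ((M.kernel _).integral_predict_mul_pos _ (M.likelihood _))
    ((M.kernel _).integral_predict_mul_pos _ (M.likelihood _))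

/-- Since the ratio never exceeds `(C / c) ^ 2`, errors made more than `n` steps ago have been
forgotten, for some `n` that does not depend on `t`. -/
lemma exists_integral_abs_filter_sub_le (M : IsMixingModel μ c C a0 a h b) {ε : ℝ} (hε : 0 < ε) :
    ∃ θ > (0 : ℝ), ∃ n : ℕ, ∀ {N : ℕ} [NeZero N] {X : ℕ → Fin N → Ω → α} {t : ℕ} {ω : Ω},
      (∀ s, s ∈ Finset.Ico (t - n) t →
        PredictClose θ (a (s + 1)) (empiricalMeasure fun j => X s j ω)
          (densityMeasure μ (particleFilter μ a0 a b X s ω))) →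
      ∫ x, |particleFilter μ a0 a b X t ω x - trueFilter μ a0 a b t x| ∂μ ≤ ε := by
  have hC : 0 < C := (M.kernel 0).pos.trans_le (M.kernel 0).le
  obtain ⟨κ, q, hκ, hq0, hq1, hcontract⟩ := exists_mul_le_of_contraction (e := ε / 2)
    (div_pos (M.kernel 0).pos hC) (div_le_one_of_le₀ (M.kernel 0).le hC.le) (by positivity)
  have hρ₀ := M.one_le_sq_div
  obtain ⟨n, hn⟩ := exists_pow_lt_of_lt_one (show 0 < ε / 2 / (C / c) ^ 2 by positivity) hq1
  refine ⟨(κ - 1) / (κ + 1), div_pos (by linarith) (by linarith), n, fun {N _ X t ω} hsample => ?_⟩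
  set f := fun t => particleFilter μ a0 a b X t ω
  have hnonneg (t : ℕ) := (M.isProbDensity_trueFilter t).nonneg
  suffices H : RatioBound (1 + ε) (f t) (trueFilter μ a0 a b t) by
    simpa using H.integral_abs_sub_le (M.isProbDensity_particleFilter X t ω)
      (M.isProbDensity_trueFilter t) (by linarith)
  have hstep (s : ℕ) (hs : s ∈ Finset.Ico (t - n) t) (σ : ℝ) (hσ : 1 ≤ σ)
      (H : RatioBound σ (f s) (trueFilter μ a0 a b s)) :
      RatioBound (1 + ε / 2 + q * (σ - (1 + ε / 2))) (f (s + 1)) (trueFilter μ a0 a b (s + 1)) :=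
    (M.ratioBound_filter_succ hκ.le (hsample s hs) H).mono (hnonneg _) (hcontract σ hσ)
  obtain htn | hnt := lt_or_ge t n
  · have H := RatioBound.add_of_forall_succ (s := 0) (k := t) (by linarith) hq0 le_rfl
      (hnonneg 0) (RatioBound.refl a0) fun s _ hst => hstep s (by simp; lia)
    rw [zero_add] at H
    exact H.mono (hnonneg t) (by linarith)
  · have H := RatioBound.add_of_forall_succ (s := t - n) (k := n) (by linarith) hq0 hρ₀
      (hnonneg _) (M.ratioBound_filter X (t - n) ω) fun s hs hst => hstep s (by simp; lia)
    rw [Nat.sub_add_cancel hnt] at H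
    refine H.mono (hnonneg t) ?_
    have hqn : q ^ n * (C / c) ^ 2 < ε / 2 := (lt_div_iff₀ (by linarith)).1 hn
    linarith [pow_nonneg hq0 n]

end IsMixingModel

section Particles

variable {α Ω : Type*} [MeasurableSpace α] {mΩ : MeasurableSpace Ω} {P : Measure Ω}

lemma pastFiltration_le {N : ℕ} {X : ℕ → Fin N → Ω → α} (hX : ∀ s j, Measurable (X s j)) (t : ℕ) :
    pastFiltration X t ≤ mΩ :=
  iSup_le fun s => (measurable_pi_lambda _ fun j => hX s j).comap_le

namespace IsMixingModel

variable {μ : Measure α} {c C : ℝ} {a0 : α → ℝ} {a : ℕ → α → α → ℝ} {h b : ℕ → α → ℝ}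

lemma isCondIIDSample (M : IsMixingModel μ c C a0 a h b) {N : ℕ} [NeZero N]
    {X : ℕ → Fin N → Ω → α} (hX : ∀ s j, Measurable (X s j)) (t : ℕ)
    (hcond : ∀ φ : Fin N → α → ℝ, (∀ j, Measurable (φ j)) → (∀ j, ∃ B, ∀ x, |φ j x| ≤ B) →
      P[fun ω => ∏ j, φ j (X t j ω) | pastFiltration X t] =ᵐ[P]
        fun ω => ∏ j, ∫ x, φ j x * particleFilter μ a0 a b X t ω x ∂μ) :
    IsCondIIDSample (pastFiltration X t) P (X t)
      fun ω => densityMeasure μ (particleFilter μ a0 a b X t ω) where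
  le := pastFiltration_le hX t
  measurable := hX t
  condExp_prod φ hφ hφ_bdd := by
    simpa only [(M.isProbDensity_particleFilter X t _).integral_densityMeasure, mul_comm]
      using hcond φ hφ hφ_bdd

/-- The filter error is small unless one of the last `n` sampling errors is large. -/
lemma exists_measureReal_lt_integral_abs_filter_sub_le [PseudoMetricSpace α]
    [OpensMeasurableSpace α] [IsProbabilityMeasure P] (hα : TotallyBounded (Set.univ : Set α))
    (M : IsMixingModel μ c C a0 a h b) (ha_unif : UniformlyContinuousKernels h a) {ε : ℝ}
    (hε : 0 < ε) :
    ∃ K r : ℝ, 0 < r ∧ ∀ (t : ℕ) {N : ℕ} [NeZero N] {X : ℕ → Fin N → Ω → α},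
      (∀ s, IsCondIIDSample (pastFiltration X s) P (X s)
        fun ω => densityMeasure μ (particleFilter μ a0 a b X s ω)) →
      P.real {ω | ε < ∫ x, |particleFilter μ a0 a b X t ω x - trueFilter μ a0 a b t x| ∂μ} ≤
        K * Real.exp (-r * N) := by
  have : Nonempty α := not_isEmpty_iff.1 fun _ => by
    simpa [μ.eq_zero_of_isEmpty] using M.initial.integral_eq_one
  obtain ⟨θ, hθ, n, hn⟩ := M.exists_integral_abs_filter_sub_le hε
  obtain ⟨K, r, hK, hr, hsample⟩ :=
    exists_measureReal_not_predictClose_le P hα M.kernel ha_unif hθ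
  refine ⟨n * K, r, hr, fun t N _ X hX => ?_⟩
  have hprob (s : ℕ) (ω : Ω) := (M.isProbDensity_particleFilter X s ω).isProbabilityMeasure
  let E (s : ℕ) : Set Ω :=
    {ω | ¬ PredictClose θ (a (s + 1)) (empiricalMeasure fun j => X s j ω)
      (densityMeasure μ (particleFilter μ a0 a b X s ω))}
  have hsub : {ω | ε < ∫ x, |particleFilter μ a0 a b X t ω x - trueFilter μ a0 a b t x| ∂μ} ⊆
      ⋃ s ∈ Finset.Ico (t - n) t, E s := by
    intro ω hω
    by_contra hE
    simp only [E, Set.mem_iUnion, Set.mem_ofPred_eq, not_exists, not_not] at hE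
    exact (hn hE).not_gt hω
  calc _ ≤ P.real (⋃ s ∈ Finset.Ico (t - n) t, E s) :=
      measureReal_mono hsub (measure_ne_top P _)
    _ ≤ ∑ s ∈ Finset.Ico (t - n) t, P.real (E s) := measureReal_biUnion_finset_le _ _
    _ ≤ ∑ _s ∈ Finset.Ico (t - n) t, K * Real.exp (-r * N) :=
      Finset.sum_le_sum fun s _ => hsample (s + 1) (hX s)
    _ ≤ n * K * Real.exp (-r * N) := by
      rw [Finset.sum_const, nsmul_eq_mul, mul_assoc, Nat.card_Ico]
      gcongr
      lia

end IsMixingModel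

end Particles

theorem particle_filter_uniform_exponential_bound_compact_general
    {α Ω : Type*} [PseudoMetricSpace α] [MeasurableSpace α] [OpensMeasurableSpace α]
    (hα : TotallyBounded (Set.univ : Set α)) {μ : Measure α} {mΩ : MeasurableSpace Ω}
    {P : Measure Ω} [IsProbabilityMeasure P] {c C : ℝ} {a0 : α → ℝ} {a : ℕ → α → α → ℝ}
    {h b : ℕ → α → ℝ} (M : IsMixingModel μ c C a0 a h b)
    (ha_unif : UniformlyContinuousKernels h a)
    {X : (N : ℕ) → ℕ → Fin N → Ω → α}
    (hX : ∀ (N : ℕ) [NeZero N] (t : ℕ), IsCondIIDSample (pastFiltration (X N) t) P (X N t)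
      fun ω => densityMeasure μ (particleFilter μ a0 a b (X N) t ω)) {ε : ℝ} (hε : 0 < ε) :
    ∃ c₁ c₂ : ℝ, 0 < c₂ ∧ ∀ t N : ℕ,
      P {ω | ε < ∫ x, |particleFilter μ a0 a b (X N) t ω x - trueFilter μ a0 a b t x| ∂μ} ≤
        ENNReal.ofReal (c₁ * Real.exp (-c₂ * N)) := by
  obtain ⟨K, r, hr, H⟩ :=
    M.exists_measureReal_lt_integral_abs_filter_sub_le (P := P) hα ha_unif hε
  refine ⟨max 1 K, r, hr, fun t N => ?_⟩
  rw [← ofReal_measureReal]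
  refine ENNReal.ofReal_le_ofReal ?_
  obtain rfl | hN := eq_or_ne N 0
  · simp
  · have : NeZero N := ⟨hN⟩
    exact (H t (hX N)).trans (by gcongr; exact le_max_right 1 K)

/-- Theorem 3: if the state space is compact, the transition densities do not depend
on `t`, and conditions (19) (`c_a h ≤ a(x',·) ≤ C_a h`), (20) (`0 < ∫ b_t h dμ < ∞`)
and (24) (`Δ(x',x) = sup_{x''}|a(x,x'')−a(x',x'')|/h(x'') → 0` as `d(x,x') → 0`)
hold, then for every `ε > 0` there are constants `c₁, c₂` such that for all times `t`
and all sample sizes `N`, `P[‖f^N_{t|t} − f_{t|t}‖₁ > ε] ≤ c₁ exp(−c₂ N)`. -/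
theorem particle_filter_uniform_exponential_bound_compact
    {α : Type*} [MeasurableSpace α] [MetricSpace α] [CompactSpace α] [BorelSpace α]
    (μ : Measure α) [SigmaFinite μ]
    {Ω : Type*} [MeasurableSpace Ω] (P : Measure Ω) [IsProbabilityMeasure P]
    (a0 : α → ℝ) (a : α → α → ℝ) (b : ℕ → α → ℝ) (h : α → ℝ)
    (ca Ca : ℝ) (hca : 0 < ca) (hcaCa : ca < Ca)
    (ha0_meas : Measurable a0) (ha0_nonneg : ∀ x, 0 ≤ a0 x)
    (ha0_int : Integrable a0 μ) (ha0_one : (∫ x, a0 x ∂μ) = 1)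
    (ha_meas : Measurable (Function.uncurry a))
    (ha_nonneg : ∀ x' x, 0 ≤ a x' x)
    (ha_kernel : ∀ x', ∫ x, a x' x ∂μ = 1)
    (hh_meas : Measurable h) (hh_nonneg : ∀ x, 0 ≤ h x)
    (hh_int : Integrable h μ) (hh_one : (∫ x, h x ∂μ) = 1)
    -- condition (19)
    (h19 : ∀ x' x, ca * h x ≤ a x' x ∧ a x' x ≤ Ca * h x)
    -- condition (24)
    (h24 : ∀ δ > (0:ℝ), ∃ η > (0:ℝ), ∀ x x', dist x x' < η →
      ∀ x'', |a x x'' - a x' x''| ≤ δ * h x'')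
    -- condition (20)
    (hb_meas : ∀ t, Measurable (b t))
    (hb_nonneg : ∀ t x, 0 ≤ b t x)
    (h20_pos : ∀ t, 0 < ∫ x, b t x * h x ∂μ)
    (h20_int : ∀ t, Integrable (fun x => b t x * h x) μ)
    -- the particle system
    (X : (N : ℕ) → ℕ → Fin N → Ω → α)
    (hX_meas : ∀ N t j, Measurable (X N t j))
    -- conditionally on the past, (X N t j)_j is an i.i.d. sample from f^N_{t|t}
    (hcond : ∀ (N t : ℕ) (φ : Fin N → α → ℝ), (∀ j, Measurable (φ j)) →
      (∀ j, ∃ C, ∀ x, |φ j x| ≤ C) →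
      P[(fun ω => ∏ j, φ j (X N t j ω)) | pastFiltration (X N) t]
        =ᵐ[P] fun ω => ∏ j, ∫ x, φ j x
          * particleFilter μ a0 (fun _ => a) b (X N) t ω x ∂μ) :
    ∀ ε : ℝ, 0 < ε → ∃ c₁ c₂ : ℝ, 0 < c₂ ∧ ∀ t N : ℕ,
      P {ω | ε < ∫ x, |particleFilter μ a0 (fun _ => a) b (X N) t ω x
            - trueFilter μ a0 (fun _ => a) b t x| ∂μ}
        ≤ ENNReal.ofReal (c₁ * Real.exp (-c₂ * N)) := by
  have M : IsMixingModel μ ca Ca a0 (fun _ => a) (fun _ => h) b :=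
    { initial := ⟨ha0_meas, ha0_nonneg, ha0_int, ha0_one⟩
      kernel := fun _ => ⟨ha_meas, hca, hcaCa.le, hh_nonneg, fun x' x => (h19 x' x).1,
        fun x' x => (h19 x' x).2⟩
      likelihood := fun t => ⟨hb_meas t, hb_nonneg t, h20_int t, h20_pos t⟩ }
  exact fun ε hε => particle_filter_uniform_exponential_bound_compact_general
    isCompact_univ.totallyBounded M
    (fun δ hδ => (h24 δ hδ).imp fun _ hη => ⟨hη.1, fun _ => hη.2⟩)
    (fun N _ t => M.isCondIIDSample (hX_meas N) t (hcond N t)) hε
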